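/- Let ℓ be a prime and let α ∈ ℚ be a rational number whose Ruban continued fraction expansion does not terminate. Then the partial quotients satisfy a_n = ℓ − 1/ℓ for all n ≥ 32·ℓ·H(α)², and moreover every complete quotient satisfies H(α_n) ≤ 4·ℓ·H(α). -/

import Mathlib

/-!
Write `α = N / (d p ^ k)` in lowest terms with `p ∤ d`, and let `β = α - ⌊α⌋`. Since `⌊α⌋ p ^ k` is
an integer and `β` vanishes mod `p`, the denominator of `β` divides `d`. Hence the next complete
quotient `1 / β` has numerator at most `d` in absolute value and denominator at most
`|β| d ≤ |N| + p d`. The latter is divisible by `p`, so its prime-to-`p` part `d'` is at most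
`|β| d / p`. As `0 ≤ ⌊α⌋ ≤ p - p ^ (-k)`, this gives `d' < max |N| d` unless `N = -d`, that is,
`α = -p ^ (-k)`, and then `1 / β = -1 / p` is a fixed point of the expansion. So `max |N| d`
strictly decreases every two steps until the fixed point is reached.
-/


open Filter Topology
open scoped Classical

/-- `a` is the `ℓ`-adic integral part of the rational number `α`. -/
def IsRubanFloorQ (p : ℕ) (α a : ℚ) : Prop :=
  (∃ (m : ℤ) (k : ℕ), a = (m : ℚ) / (p : ℚ) ^ k) ∧ 0 ≤ a ∧ a < (p : ℚ) ∧
    padicNorm p (α - a) < 1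

noncomputable def rubanFloorQ (p : ℕ) (α : ℚ) : ℚ :=
  if h : ∃ a : ℚ, IsRubanFloorQ p α a then h.choose else 0

/-- Complete quotients of the Ruban continued fraction expansion of a rational number. -/
noncomputable def rubanCQQ (p : ℕ) (α : ℚ) : ℕ → ℚ
  | 0 => α
  | n + 1 => (rubanCQQ p α n - rubanFloorQ p (rubanCQQ p α n))⁻¹

/-- Partial quotients of the Ruban continued fraction expansion of a rational number. -/
noncomputable def rubanPQQ (p : ℕ) (α : ℚ) (n : ℕ) : ℚ :=
  rubanFloorQ p (rubanCQQ p α n)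

/-- The Ruban continued fraction expansion of `α` terminates. -/
def RubanTerminatesQ (p : ℕ) (α : ℚ) : Prop :=
  ∃ n, rubanCQQ p α n = rubanPQQ p α n


/-- The multiplicative height of a rational number. -/
def ratHeight (α : ℚ) : ℚ := max (|α.num| : ℚ) (α.den : ℚ)

/-- The prime-to-`p` part of the denominator of `α`, i.e. the `d` in `α = N / (d p ^ k)`. -/
def denCompl (p : ℕ) (α : ℚ) : ℕ := ordCompl[p] α.den

/-- The Gauss map `α ↦ 1 / (α - ⌊α⌋)` of the Ruban continued fraction, which sends each complete
quotient to the next one (and, as `0⁻¹ = 0`, sends `⌊α⌋` to `0`). -/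
noncomputable def rubanGaussMap (p : ℕ) (α : ℚ) : ℚ := (α - rubanFloorQ p α)⁻¹

lemma coprime_den_of_dvd_num {n : ℕ} {q : ℚ} (h : (n : ℤ) ∣ q.num) : n.Coprime q.den :=
  q.reduced.coprime_dvd_left (Int.natCast_dvd.1 h)

lemma exists_lt_and_dvd_sub_mul {d e : ℕ} (he : 0 < e) (h : d.Coprime e) (a : ℤ) :
    ∃ m : ℤ, 0 ≤ m ∧ m < e ∧ (e : ℤ) ∣ a - m * d := by
  have he_pos : (0 : ℤ) < e := mod_cast he
  obtain ⟨y, hy⟩ := Int.mod_coprime h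
  refine ⟨a * y % e, Int.emod_nonneg _ he_pos.ne', Int.emod_lt_of_pos _ he_pos, Int.ModEq.dvd ?_⟩
  calc a * y % e * d ≡ a * y * d [ZMOD e] := (Int.mod_modEq _ _).mul_right _
    _ = a * (d * y) := by ring
    _ ≡ a * 1 [ZMOD e] := hy.mul_left _
    _ = a := mul_one _

lemma den_intCast_div_natCast_dvd (m : ℤ) (n : ℕ) : ((m : ℚ) / n).den ∣ n := by
  have h := Rat.den_dvd m n
  rw [Rat.divInt_eq_div] at h
  exact_mod_cast h

lemma natAbs_num_inv_le (q : ℚ) : q⁻¹.num.natAbs ≤ q.den := by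
  rw [Rat.num_inv, Int.natAbs_mul, Int.natAbs_natCast]
  exact mul_le_of_le_one_left' (by rw [Int.natAbs_sign]; split_ifs <;> simp)

lemma den_inv_eq_abs_mul_den {q : ℚ} (hq : q ≠ 0) : (q⁻¹.den : ℚ) = |q| * q.den := by
  rw [Rat.den_inv_of_ne_zero hq, Nat.cast_natAbs, Int.cast_abs, ← Rat.mul_den_eq_num, abs_mul,
    Nat.abs_cast]

lemma ratHeight_neg_one_div_natCast {n : ℕ} (hn : 0 < n) : ratHeight (-1 / n) = n := by
  have h_one_le : (1 : ℚ) ≤ n := mod_cast hn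
  rw [ratHeight, neg_div, one_div, Rat.neg_num, Rat.neg_den, Rat.inv_natCast_num_of_pos hn,
    Rat.inv_natCast_den_of_pos hn]
  simpa using h_one_le

lemma ratHeight_eq_natCast (α : ℚ) : ratHeight α = (max α.num.natAbs α.den : ℕ) := by
  rw [ratHeight, Nat.cast_max, Nat.cast_natAbs, Int.cast_abs]

section DenCompl

variable (p : ℕ) (α : ℚ)

lemma denCompl_pos : 0 < denCompl p α := Nat.ordCompl_pos p α.den_nz

lemma denCompl_le_den : denCompl p α ≤ α.den := Nat.ordCompl_le α.den p

lemma mul_denCompl : α * denCompl p α = α.num / (p : ℚ) ^ α.den.factorization p := by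
  have hpow : (p : ℚ) ^ α.den.factorization p ≠ 0 := mod_cast (Nat.ordProj_pos α.den p).ne'
  have hden : (denCompl p α : ℚ) * (p : ℚ) ^ α.den.factorization p = α.den :=
    mod_cast (mul_comm _ _).trans (Nat.ordProj_mul_ordCompl_eq_self α.den p)
  rw [eq_div_iff hpow, mul_assoc, hden, Rat.mul_den_eq_num]

lemma abs_mul_denCompl :
    |α| * denCompl p α = |(α.num : ℚ)| / (p : ℚ) ^ α.den.factorization p := by
  rw [← Nat.abs_cast (denCompl p α), ← abs_mul, mul_denCompl, abs_div, abs_pow, Nat.abs_cast]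

variable {p α}

lemma dvd_denCompl_of_dvd_den {n : ℕ} (hn : p.Coprime n) (h : n ∣ α.den) : n ∣ denCompl p α := by
  rw [← Nat.ordProj_mul_ordCompl_eq_self α.den p] at h
  exact (hn.symm.pow_right _).dvd_of_dvd_mul_left h

end DenCompl

section Prime

variable {p : ℕ} [hp : Fact p.Prime] {α a b : ℚ}

lemma padicNorm_lt_one_iff_dvd_num : padicNorm p α < 1 ↔ (p : ℤ) ∣ α.num := by
  have hα : padicNorm p α = padicNorm p α.num / padicNorm p α.den := by
    rw [← padicNorm.div, Rat.num_div_den]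
  constructor
  · contrapose!
    intro h
    rw [hα, (padicNorm.int_eq_one_iff _).2 h]
    have hden : padicNorm p α.den ≠ 0 := padicNorm.nonzero (by simp)
    exact one_le_one_div ((padicNorm.nonneg _).lt_of_ne' hden) (padicNorm.of_nat _)
  · intro h
    have hden : ¬p ∣ α.den := (hp.out.coprime_iff_not_dvd).1 (coprime_den_of_dvd_num h)
    rwa [hα, (padicNorm.nat_eq_one_iff _).2 hden, div_one, padicNorm.int_lt_one_iff]

lemma coprime_denCompl : p.Coprime (denCompl p α) := Nat.coprime_ordCompl hp.out α.den_nz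

lemma mul_denCompl_le_den (h : p ∣ α.den) : p * denCompl p α ≤ α.den := by
  have hproj : p ≤ ordProj[p] α.den :=
    Nat.le_of_dvd (Nat.ordProj_pos _ _) (Nat.dvd_ordProj_of_dvd α.den_nz hp.out h)
  calc p * denCompl p α ≤ ordProj[p] α.den * denCompl p α := Nat.mul_le_mul_right _ hproj
    _ = α.den := Nat.ordProj_mul_ordCompl_eq_self _ _

theorem IsRubanFloorQ.unique (ha : IsRubanFloorQ p α a) (hb : IsRubanFloorQ p α b) : a = b := by
  obtain ⟨⟨m, k, ha_eq⟩, ha_nonneg, ha_lt, ha_norm⟩ := ha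
  obtain ⟨⟨m', k', hb_eq⟩, hb_nonneg, hb_lt, hb_norm⟩ := hb
  have hnum : (p : ℤ) ∣ (a - b).num := by
    rw [← padicNorm_lt_one_iff_dvd_num, ← sub_sub_sub_cancel_left b a α]
    exact padicNorm.sub.trans_lt (max_lt hb_norm ha_norm)
  have hden_dvd : (a - b).den ∣ p ^ k * p ^ k' := by
    refine (Rat.sub_den_dvd a b).trans (mul_dvd_mul ?_ ?_)
    · simpa only [ha_eq, Nat.cast_pow] using den_intCast_div_natCast_dvd m (p ^ k)
    · simpa only [hb_eq, Nat.cast_pow] using den_intCast_div_natCast_dvd m' (p ^ k')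
  have hden : (a - b).den = 1 := by
    rw [← pow_add] at hden_dvd
    exact Nat.eq_one_of_dvd_coprimes ((coprime_den_of_dvd_num hnum).pow_left _) hden_dvd dvd_rfl
  have hint : ((a - b).num : ℚ) = a - b := Rat.coe_int_num_of_den_eq_one hden
  have habs : |(a - b).num| < p := by
    have hlt : |((a - b).num : ℚ)| < p := by
      rw [hint]
      exact abs_sub_lt_of_nonneg_of_lt ha_nonneg ha_lt hb_nonneg hb_lt
    exact_mod_cast hlt
  exact sub_eq_zero.1 (Rat.num_eq_zero.1 (Int.eq_zero_of_abs_lt_dvd hnum habs))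

theorem IsRubanFloorQ.rubanFloorQ_eq (ha : IsRubanFloorQ p α a) : rubanFloorQ p α = a := by
  have h : ∃ a, IsRubanFloorQ p α a := ⟨a, ha⟩
  rw [rubanFloorQ, dif_pos h]
  exact h.choose_spec.unique ha

variable (p α)

lemma exists_isRubanFloorQ_div_pow : ∃ m : ℤ, m < (p : ℤ) ^ (α.den.factorization p + 1) ∧
    IsRubanFloorQ p α (m / (p : ℚ) ^ α.den.factorization p) := by
  set k := α.den.factorization p with hk
  obtain ⟨m, hm_nonneg, hm_lt, c, hc⟩ := exists_lt_and_dvd_sub_mul (pow_pos hp.out.pos (k + 1))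
    (coprime_denCompl.symm.pow_right _) α.num
  have hp_pos : (0 : ℚ) < p := mod_cast hp.out.pos
  have hd_ne : (denCompl p α : ℚ) ≠ 0 := mod_cast (denCompl_pos p α).ne'
  have hm_lt' : (m : ℚ) < p * (p : ℚ) ^ k := by rw [← pow_succ']; exact_mod_cast hm_lt
  refine ⟨m, mod_cast hm_lt, ⟨m, k, rfl⟩,
    div_nonneg (mod_cast hm_nonneg) (by positivity), (div_lt_iff₀ (by positivity)).2 hm_lt', ?_⟩
  have hsub : α - m / (p : ℚ) ^ k = p * c / denCompl p α := by
    have hα := mul_denCompl p α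
    have hcq : (α.num - m * denCompl p α : ℚ) = (p : ℚ) ^ (k + 1) * c := mod_cast hc
    rw [← hk, eq_div_iff (by positivity)] at hα
    field_simp
    rw [pow_succ] at hcq
    linear_combination hα + hcq
  rw [hsub, padicNorm.div,
    (padicNorm.nat_eq_one_iff _).2 (hp.out.coprime_iff_not_dvd.1 coprime_denCompl), div_one]
  exact_mod_cast (padicNorm.int_lt_one_iff (p * c)).2 (dvd_mul_right _ _)

theorem isRubanFloorQ_rubanFloorQ : IsRubanFloorQ p α (rubanFloorQ p α) := by
  obtain ⟨m, -, hm⟩ := exists_isRubanFloorQ_div_pow p α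
  rwa [hm.rubanFloorQ_eq]

lemma rubanFloorQ_nonneg : 0 ≤ rubanFloorQ p α := (isRubanFloorQ_rubanFloorQ p α).2.1

lemma rubanFloorQ_lt : rubanFloorQ p α < p := (isRubanFloorQ_rubanFloorQ p α).2.2.1

lemma exists_rubanFloorQ_eq_div_pow : ∃ m : ℤ, m < (p : ℤ) ^ (α.den.factorization p + 1) ∧
    rubanFloorQ p α = m / (p : ℚ) ^ α.den.factorization p := by
  obtain ⟨m, hm_lt, hm⟩ := exists_isRubanFloorQ_div_pow p α
  exact ⟨m, hm_lt, hm.rubanFloorQ_eq⟩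

lemma rubanFloorQ_le : rubanFloorQ p α ≤ p - 1 / (p : ℚ) ^ α.den.factorization p := by
  obtain ⟨m, hm_lt, hm⟩ := exists_rubanFloorQ_eq_div_pow p α
  have hp_pos : (0 : ℚ) < p := mod_cast hp.out.pos
  have hm_le : (m : ℚ) + 1 ≤ (p : ℚ) ^ (α.den.factorization p + 1) := mod_cast hm_lt
  rw [hm, le_sub_iff_add_le, ← add_div, div_le_iff₀ (by positivity), ← pow_succ']
  exact hm_le

lemma dvd_num_sub_rubanFloorQ : (p : ℤ) ∣ (α - rubanFloorQ p α).num :=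
  padicNorm_lt_one_iff_dvd_num.1 (isRubanFloorQ_rubanFloorQ p α).2.2.2

lemma den_sub_rubanFloorQ_dvd : (α - rubanFloorQ p α).den ∣ denCompl p α := by
  refine dvd_denCompl_of_dvd_den (coprime_den_of_dvd_num (dvd_num_sub_rubanFloorQ p α)) ?_
  obtain ⟨m, -, hm⟩ := exists_rubanFloorQ_eq_div_pow p α
  refine (Rat.sub_den_dvd_lcm _ _).trans (Nat.lcm_dvd dvd_rfl ?_)
  rw [hm, ← Nat.cast_pow]
  exact (den_intCast_div_natCast_dvd _ _).trans (Nat.ordProj_dvd _ _)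

lemma natAbs_num_rubanGaussMap_le : (rubanGaussMap p α).num.natAbs ≤ denCompl p α :=
  (natAbs_num_inv_le _).trans (Nat.le_of_dvd (denCompl_pos p α) (den_sub_rubanFloorQ_dvd p α))

theorem rubanFloorQ_neg_one_div_pow (k : ℕ) :
    rubanFloorQ p (-1 / (p : ℚ) ^ k) = p - 1 / (p : ℚ) ^ k := by
  have hp_one : (1 : ℚ) < p := mod_cast hp.out.one_lt
  have hpos : 0 < 1 / (p : ℚ) ^ k := by positivity
  have hle : 1 / (p : ℚ) ^ k ≤ 1 := div_le_one_of_le₀ (one_le_pow₀ hp_one.le) (by positivity)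
  refine IsRubanFloorQ.rubanFloorQ_eq ⟨⟨p ^ (k + 1) - 1, k, ?_⟩, by linarith, by linarith, ?_⟩
  · push_cast
    rw [pow_succ, sub_div, mul_div_cancel_left₀ _ (by positivity)]
  · rw [show -1 / (p : ℚ) ^ k - (p - 1 / (p : ℚ) ^ k) = -p by ring, padicNorm.neg]
    exact padicNorm.padicNorm_p_lt_one_of_prime

theorem rubanFloorQ_neg_one_div : rubanFloorQ p (-1 / p) = p - 1 / p := by
  simpa only [pow_one] using rubanFloorQ_neg_one_div_pow p 1

theorem rubanGaussMap_neg_one_div_pow (k : ℕ) : rubanGaussMap p (-1 / (p : ℚ) ^ k) = -1 / p := by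
  rw [rubanGaussMap, rubanFloorQ_neg_one_div_pow]
  ring

variable {p α}

lemma den_rubanGaussMap_le_abs_mul (h : α ≠ rubanFloorQ p α) :
    ((rubanGaussMap p α).den : ℚ) ≤ |α - rubanFloorQ p α| * denCompl p α := by
  rw [rubanGaussMap, den_inv_eq_abs_mul_den (sub_ne_zero.2 h)]
  gcongr
  exact Nat.le_of_dvd (denCompl_pos p α) (den_sub_rubanFloorQ_dvd p α)

lemma dvd_den_rubanGaussMap (h : α ≠ rubanFloorQ p α) : p ∣ (rubanGaussMap p α).den := by
  rw [rubanGaussMap, Rat.den_inv_of_ne_zero (sub_ne_zero.2 h), ← Int.natCast_dvd]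
  exact dvd_num_sub_rubanFloorQ p α

lemma den_rubanGaussMap_le (h : α ≠ rubanFloorQ p α) :
    (rubanGaussMap p α).den ≤ α.num.natAbs + p * denCompl p α := by
  have hpow : (1 : ℚ) ≤ (p : ℚ) ^ α.den.factorization p :=
    one_le_pow₀ (mod_cast hp.out.one_le)
  have habs : |α - rubanFloorQ p α| ≤ |α| + p := by
    have hlt := rubanFloorQ_lt p α
    calc |α - rubanFloorQ p α| ≤ |α| + |rubanFloorQ p α| := abs_sub _ _
      _ ≤ |α| + p := by rw [abs_of_nonneg (rubanFloorQ_nonneg p α)]; gcongr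
  have hcast : ((rubanGaussMap p α).den : ℚ) ≤ (α.num.natAbs + p * denCompl p α : ℕ) := by
    calc ((rubanGaussMap p α).den : ℚ) ≤ |α - rubanFloorQ p α| * denCompl p α :=
          den_rubanGaussMap_le_abs_mul h
      _ ≤ (|α| + p) * denCompl p α := by gcongr
      _ = |(α.num : ℚ)| / (p : ℚ) ^ α.den.factorization p + p * denCompl p α := by
          rw [add_mul, abs_mul_denCompl]
      _ ≤ |(α.num : ℚ)| + p * denCompl p α := by
          gcongr
          exact div_le_self (abs_nonneg _) hpow
      _ = (α.num.natAbs + p * denCompl p α : ℕ) := by push_cast [Nat.cast_natAbs]; rfl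
  exact_mod_cast hcast

lemma abs_sub_rubanFloorQ_mul_lt_of_nonneg (hα : 0 ≤ α) :
    |α - rubanFloorQ p α| * denCompl p α < p * max |(α.num : ℚ)| (denCompl p α) := by
  have hp_one : (1 : ℚ) < p := mod_cast hp.out.one_lt
  have hd_pos : (0 : ℚ) < denCompl p α := mod_cast denCompl_pos p α
  have hlt := rubanFloorQ_lt p α
  rw [← lt_div_iff₀ hd_pos]
  refine abs_sub_lt_of_nonneg_of_lt hα ?_ (rubanFloorQ_nonneg p α) ?_ <;> rw [lt_div_iff₀ hd_pos]
  · calc α * denCompl p α = |(α.num : ℚ)| / (p : ℚ) ^ α.den.factorization p := by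
          rw [← abs_mul_denCompl, abs_of_nonneg hα]
      _ ≤ |(α.num : ℚ)| := div_le_self (abs_nonneg _) (one_le_pow₀ hp_one.le)
      _ ≤ max |(α.num : ℚ)| (denCompl p α) := le_max_left _ _
      _ < p * max |(α.num : ℚ)| (denCompl p α) :=
          lt_mul_of_one_lt_left (lt_max_of_lt_right hd_pos) hp_one
  · calc rubanFloorQ p α * denCompl p α < p * denCompl p α := by gcongr
      _ ≤ p * max |(α.num : ℚ)| (denCompl p α) := by gcongr; exact le_max_right _ _

lemma abs_sub_rubanFloorQ_mul_lt_of_neg (hα : α < 0)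
    (hfix : α ≠ -1 / (p : ℚ) ^ α.den.factorization p) :
    |α - rubanFloorQ p α| * denCompl p α < p * max |(α.num : ℚ)| (denCompl p α) := by
  have hp_one : (1 : ℚ) < p := mod_cast hp.out.one_lt
  have hd_pos : (0 : ℚ) < denCompl p α := mod_cast denCompl_pos p α
  have hfloor := rubanFloorQ_le p α
  have hnum := abs_mul_denCompl p α
  have habs : |α - rubanFloorQ p α| = |α| + rubanFloorQ p α := by
    rw [abs_of_neg hα, abs_of_neg (by linarith [rubanFloorQ_nonneg p α])]
    ring
  set e : ℚ := 1 / (p : ℚ) ^ α.den.factorization p with he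
  have he_pos : 0 < e := by positivity
  have he_le : e ≤ 1 := div_le_one_of_le₀ (one_le_pow₀ hp_one.le) (by positivity)
  set d : ℚ := (denCompl p α : ℚ)
  set x : ℚ := |(α.num : ℚ)|
  rw [div_eq_mul_one_div, ← he] at hnum
  have hne : x ≠ d := by
    intro hxd
    rw [hxd, mul_comm, mul_right_inj' hd_pos.ne', abs_of_neg hα] at hnum
    exact hfix (by rw [neg_div, ← he]; linarith)
  have hle : |α - rubanFloorQ p α| * d ≤ p * d + (x - d) * e := by
    rw [habs]
    linarith [mul_le_mul_of_nonneg_right hfloor hd_pos.le]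
  rcases hne.lt_or_gt with hlt | hgt
  · rw [max_eq_right hlt.le]
    linarith [mul_neg_of_neg_of_pos (sub_neg.2 hlt) he_pos]
  · rw [max_eq_left hgt.le]
    calc |α - rubanFloorQ p α| * d ≤ p * d + (x - d) * e := hle
      _ < p * d + (x - d) * p :=
          add_lt_add_right (mul_lt_mul_of_pos_left (he_le.trans_lt hp_one) (sub_pos.2 hgt)) _
      _ = p * x := by ring

lemma denCompl_rubanGaussMap_lt (h : α ≠ rubanFloorQ p α)
    (hfix : α ≠ -1 / (p : ℚ) ^ α.den.factorization p) :
    denCompl p (rubanGaussMap p α) < max α.num.natAbs (denCompl p α) := by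
  have habs : |α - rubanFloorQ p α| * denCompl p α < p * max |(α.num : ℚ)| (denCompl p α) := by
    rcases le_or_gt 0 α with hα | hα
    · exact abs_sub_rubanFloorQ_mul_lt_of_nonneg hα
    · exact abs_sub_rubanFloorQ_mul_lt_of_neg hα hfix
  have hden : (rubanGaussMap p α).den < p * max α.num.natAbs (denCompl p α) := by
    have hlt := (den_rubanGaussMap_le_abs_mul h).trans_lt habs
    rw [← Int.cast_abs, ← Nat.cast_natAbs] at hlt
    exact_mod_cast hlt
  exact lt_of_mul_lt_mul_left' ((mul_denCompl_le_den (dvd_den_rubanGaussMap h)).trans_lt hden)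

/-- The offset in the bound on the numerator is due to `natAbs_num_rubanGaussMap_le`: each numerator
is controlled by the `denCompl` of the previous complete quotient. -/
lemma rubanCQQ_eq_neg_one_div_or_bounds {H : ℕ} (hnt : ¬RubanTerminatesQ p α)
    (hnum : α.num.natAbs ≤ H) (hden : α.den ≤ H) (n : ℕ) :
    rubanCQQ p α n = -1 / p ∨
      2 * (rubanCQQ p α n).num.natAbs + n ≤ 2 * H + 1 ∧
      2 * denCompl p (rubanCQQ p α n) + n ≤ 2 * H ∧
      (rubanCQQ p α n).den ≤ (p + 1) * H := by
  induction n with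
  | zero =>
    have hd := denCompl_le_den p α
    exact .inr ⟨by rw [rubanCQQ]; lia, by rw [rubanCQQ]; lia, by rw [rubanCQQ]; nlinarith⟩
  | succ n ih =>
    have hne : rubanCQQ p α n ≠ rubanFloorQ p (rubanCQQ p α n) := fun h ↦ hnt ⟨n, h⟩
    have hsucc : rubanCQQ p α (n + 1) = rubanGaussMap p (rubanCQQ p α n) := rfl
    rw [hsucc]
    rcases ih with hfix | ⟨hnum_n, hcompl_n, -⟩
    · left
      simpa only [hfix, pow_one] using rubanGaussMap_neg_one_div_pow p 1
    by_cases hfix : rubanCQQ p α n = -1 / (p : ℚ) ^ (rubanCQQ p α n).den.factorization p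
    · left
      rw [hfix, rubanGaussMap_neg_one_div_pow]
    · right
      have hnum_le := natAbs_num_rubanGaussMap_le p (rubanCQQ p α n)
      have hcompl_lt := denCompl_rubanGaussMap_lt hne hfix
      refine ⟨by lia, by lia, ?_⟩
      calc (rubanGaussMap p (rubanCQQ p α n)).den
          ≤ (rubanCQQ p α n).num.natAbs + p * denCompl p (rubanCQQ p α n) :=
            den_rubanGaussMap_le hne
        _ ≤ H + p * H := by gcongr <;> lia
        _ = (p + 1) * H := by ring

end Prime

theorem ruban_rational_quantified_general (ℓ : ℕ) (hℓ : ℓ.Prime) (α : ℚ)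
    (hnt : ¬RubanTerminatesQ ℓ α) :
    (∀ n : ℕ, 2 * ratHeight α ≤ n → rubanPQQ ℓ α n = ℓ - 1 / ℓ) ∧
    ∀ n : ℕ, ratHeight (rubanCQQ ℓ α n) ≤ (ℓ + 1) * ratHeight α := by
  have : Fact ℓ.Prime := ⟨hℓ⟩
  have hbounds := rubanCQQ_eq_neg_one_div_or_bounds hnt (le_max_left _ _) (le_max_right _ _)
  have hH_pos : 0 < max α.num.natAbs α.den := lt_max_of_lt_right α.pos
  rw [ratHeight_eq_natCast α]
  set H := max α.num.natAbs α.den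
  refine ⟨fun n hn ↦ ?_, fun n ↦ ?_⟩
  · have hn' : 2 * H ≤ n := mod_cast hn
    rcases hbounds n with hfix | ⟨-, hcompl, -⟩
    · rw [rubanPQQ, hfix, rubanFloorQ_neg_one_div]
    · have hcompl_pos := denCompl_pos ℓ (rubanCQQ ℓ α n)
      lia
  · suffices hle : ratHeight (rubanCQQ ℓ α n) ≤ ((ℓ + 1) * H : ℕ) by exact_mod_cast hle
    rcases hbounds n with hfix | ⟨hnum, -, hden⟩
    · rw [hfix, ratHeight_neg_one_div_natCast hℓ.pos]
      exact mod_cast by nlinarith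
    · rw [ratHeight_eq_natCast]
      exact mod_cast max_le (by nlinarith) hden

/-- If the Ruban continued fraction expansion of a rational `α` does not
terminate, then all partial quotients `a_n` with `n ≥ 32 ℓ H(α)^2` equal `ℓ - 1/ℓ`, and
every complete quotient has height at most `4 ℓ H(α)`. -/
theorem ruban_rational_quantified
    (ℓ : ℕ) (hℓ : ℓ.Prime) (α : ℚ) (hnt : ¬ RubanTerminatesQ ℓ α) :
    (∀ n : ℕ, 32 * (ℓ : ℚ) * ratHeight α ^ 2 ≤ (n : ℚ) →
      rubanPQQ ℓ α n = (ℓ : ℚ) - 1 / (ℓ : ℚ)) ∧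
    ∀ n : ℕ, ratHeight (rubanCQQ ℓ α n) ≤ 4 * (ℓ : ℚ) * ratHeight α := by
  have hℓ_one : (1 : ℚ) ≤ ℓ := mod_cast hℓ.one_le
  have hH : 1 ≤ ratHeight α := le_max_of_le_right (mod_cast α.pos)
  obtain ⟨hpq, hcq⟩ := ruban_rational_quantified_general ℓ hℓ α hnt
  exact ⟨fun n hn ↦ hpq n (by nlinarith), fun n ↦ (hcq n).trans (by nlinarith)⟩
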